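/- Let f, h : ℝ^D → ℝ^D (Euclidean space), let x ∈ ℝ^D, and suppose: h is Lipschitz with constant L_h and has Fréchet derivative H' at x with det H' ≠ 0; f is a bijection with Fréchet derivative F' at x; the inverse function f⁻¹ is Lipschitz with constant L_g and has a Fréchet derivative G' at f(x). Then log( |det H'| / |det F'| ) ≤ D · ( L_h + L_g − 2 ), where det denotes the determinant of a continuous linear map on ℝ^D. -/

import Mathlib

theorem abs_det_le_pow_aux {D : ℕ}
    (A : EuclideanSpace ℝ (Fin D) →L[ℝ] EuclideanSpace ℝ (Fin D)) (L : ℝ) (hL : ‖A‖ ≤ L) :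
    |A.det| ≤ L ^ D := by
  have hL0 : 0 ≤ L := (norm_nonneg A).trans hL
  have hsub : A '' Metric.closedBall 0 1 ⊆ Metric.closedBall 0 L := by
    rintro _ ⟨y, hy, rfl⟩
    rw [mem_closedBall_zero_iff] at hy ⊢
    calc ‖A y‖ ≤ ‖A‖ * ‖y‖ := A.le_opNorm y
      _ ≤ L * 1 := by gcongr
      _ = L := mul_one L
  have h1 := MeasureTheory.measure_mono (μ := MeasureTheory.volume) hsub
  rw [MeasureTheory.Measure.addHaar_image_continuousLinearMap,
    MeasureTheory.Measure.addHaar_closedBall _ _ hL0,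
    MeasureTheory.Measure.addHaar_closedBall _ _ zero_le_one, one_pow, ENNReal.ofReal_one,
    one_mul, finrank_euclideanSpace_fin] at h1
  have h2 := (ENNReal.mul_le_mul_iff_left (Metric.measure_ball_pos _ _ one_pos).ne'
    MeasureTheory.measure_ball_lt_top.ne).1 h1
  exact (ENNReal.ofReal_le_ofReal_iff (by positivity)).1 h2

theorem log_abs_det_le_aux {D : ℕ}
    (A : EuclideanSpace ℝ (Fin D) →L[ℝ] EuclideanSpace ℝ (Fin D)) (L : ℝ) (hL : ‖A‖ ≤ L)
    (hA : A.det ≠ 0) : Real.log |A.det| ≤ D * (L - 1) := by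
  have hL0 : 0 ≤ L := (norm_nonneg A).trans hL
  rw [Real.log_le_iff_le_exp (abs_pos.2 hA), Real.exp_nat_mul]
  refine (abs_det_le_pow_aux A L hL).trans (pow_le_pow_left₀ hL0 ?_ D)
  linarith [Real.add_one_le_exp (L - 1)]

/-- **Pointwise Jacobian bound (Lemma on `log(|J_h|/|J_f|)`).**
Let `f, h : ℝ^D → ℝ^D`, `x ∈ ℝ^D`, with `h` Lipschitz with constant `L_h` and
Fréchet differentiable at `x` with derivative `H'` satisfying `det H' ≠ 0`;
`f` a bijection differentiable at `x` with derivative `F'`; and the inverse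
`f⁻¹` Lipschitz with constant `L_g` and differentiable at `f x` with
derivative `G'`.  Then `log(|det H'| / |det F'|) ≤ D·(L_h + L_g − 2)`. -/
theorem log_jacobian_ratio_le_lipschitz
    {D : ℕ} (f h : EuclideanSpace ℝ (Fin D) → EuclideanSpace ℝ (Fin D))
    (x : EuclideanSpace ℝ (Fin D))
    (Lh Lg : NNReal)
    (hhLip : LipschitzWith Lh h)
    (H' : EuclideanSpace ℝ (Fin D) →L[ℝ] EuclideanSpace ℝ (Fin D))
    (hH : HasFDerivAt h H' x) (hHdet : H'.det ≠ 0)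
    (hf : Function.Bijective f)
    (F' : EuclideanSpace ℝ (Fin D) →L[ℝ] EuclideanSpace ℝ (Fin D))
    (hF : HasFDerivAt f F' x)
    (hginvLip : LipschitzWith Lg (Function.invFun f))
    (G' : EuclideanSpace ℝ (Fin D) →L[ℝ] EuclideanSpace ℝ (Fin D))
    (hG : HasFDerivAt (Function.invFun f) G' (f x)) :
    Real.log (|H'.det| / |F'.det|) ≤ D * ((Lh : ℝ) + (Lg : ℝ) - 2) := by
  have hcomp : G'.comp F' = ContinuousLinearMap.id ℝ _ := by
    have h1 := hG.comp x hF
    have h2 : Function.invFun f ∘ f = id := Function.invFun_comp hf.1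
    rw [h2] at h1
    exact h1.unique (hasFDerivAt_id x)
  have hdet : G'.det * F'.det = 1 := by
    have h1 : LinearMap.det (G'.toLinearMap ∘ₗ F'.toLinearMap) = 1 := by
      rw [← ContinuousLinearMap.toLinearMap_comp, hcomp]
      simp
    rwa [LinearMap.det_comp] at h1
  have hG0 : G'.det ≠ 0 := left_ne_zero_of_mul_eq_one hdet
  have heq : |H'.det| / |F'.det| = |H'.det| * |G'.det| := by
    have hF0 : |F'.det| ≠ 0 := abs_ne_zero.2 (right_ne_zero_of_mul_eq_one hdet)
    rw [div_eq_iff hF0, mul_assoc, ← abs_mul, hdet, abs_one, mul_one]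
  rw [heq, Real.log_mul (abs_ne_zero.2 hHdet) (abs_ne_zero.2 hG0)]
  have a := log_abs_det_le_aux H' Lh (hH.le_of_lipschitz hhLip) hHdet
  have b := log_abs_det_le_aux G' Lg (hG.le_of_lipschitz hginvLip) hG0
  linarith
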